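/- Let 𝒳, 𝒥, 𝒵, 𝒴̂ be finite sets and set Y = (J, Z, Ŷ). Let P_{X J Z Ŷ} and Q_{X J Z Ŷ} be pmfs satisfying I_Q(Ŷ; (X,J) | Z) = 0, P_{XJZ} = Q_{XJZ}, P_{ŶZ} = Q_{ŶZ}, and D(P_{XY}‖Q_{XY}) < ∞. Then for every R > 0, E_{P_{XY},Q_{XY}}(R) ≤ sup over finite 𝒰 and channels P_{U|X} with I_P(U; X | (Z,J)) ≤ R of I_P(Ŷ; (U,J) | Z). -/

import Mathlib

open scoped BigOperators

noncomputable section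

open Classical in
/-- Pushforward of a finitely supported mass function along a map. -/
def pushf {Ω α : Type*} [Fintype Ω] (p : Ω → ℝ) (f : Ω → α) : α → ℝ :=
  fun a => ∑ ω, if f ω = a then p ω else 0

/-- `p` is a probability mass function. -/
def IsPMF {α : Type*} [Fintype α] (p : α → ℝ) : Prop :=
  (∀ a, 0 ≤ p a) ∧ ∑ a, p a = 1

/-- Kullback–Leibler divergence `D(p‖q)` of mass functions, valued in `EReal`
(equal to `⊤` if `p` is not absolutely continuous w.r.t. `q`). -/
def klDiv {α : Type*} [Fintype α] (p q : α → ℝ) : EReal :=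
  if ∀ a, q a = 0 → p a = 0 then ((∑ a, p a * Real.log (p a / q a) : ℝ) : EReal) else ⊤

/-- Shannon entropy. -/
def entropy {α : Type*} [Fintype α] (p : α → ℝ) : ℝ :=
  -∑ a, p a * Real.log (p a)

/-- Conditional mutual information `I(A;B|C)` under the mass function `p`. -/
def condMI {Ω α β γ : Type*} [Fintype Ω] [Fintype α] [Fintype β] [Fintype γ]
    (p : Ω → ℝ) (A : Ω → α) (B : Ω → β) (C : Ω → γ) : ℝ :=
  entropy (pushf p (fun ω => (A ω, C ω))) + entropy (pushf p (fun ω => (B ω, C ω)))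
    - entropy (pushf p (fun ω => (A ω, B ω, C ω))) - entropy (pushf p C)

/-- First marginal of a joint mass function. -/
def margFst {α β : Type*} [Fintype α] [Fintype β] (p : α × β → ℝ) : α → ℝ :=
  fun a => ∑ b, p (a, b)

/-- Conditional mass function of the second coordinate given the first. -/
def condSnd {α β : Type*} [Fintype α] [Fintype β] (p : α × β → ℝ) : α → β → ℝ :=
  fun a b => p (a, b) / margFst p a

/-- Output distribution of a channel on an input distribution. -/
def outDist {α β : Type*} [Fintype α] [Fintype β] (ch : α → β → ℝ) (pa : α → ℝ) : β → ℝ :=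
  fun b => ∑ a, pa a * ch a b

/-- The difference functional
`f(P'_X) = sup_{Q̂_X ≪ Q_X} D(P'_Y‖Q̂_Y) − D(P'_Z‖Q̂_Z)`. -/
def fdiff {X Y Z : Type*} [Fintype X] [Fintype Y] [Fintype Z]
    (pYgX : X → Y → ℝ) (pZgX : X → Z → ℝ) (qYgX : X → Y → ℝ) (qZgX : X → Z → ℝ)
    (qX : X → ℝ) (pX' : X → ℝ) : EReal :=
  sSup {d : EReal | ∃ qhX : X → ℝ, IsPMF qhX ∧ (∀ x, qX x = 0 → qhX x = 0) ∧
    d = klDiv (outDist pYgX pX') (outDist qYgX qhX)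
        - klDiv (outDist pZgX pX') (outDist qZgX qhX)}

/-- The quantity `G_{P_XY, Q_XY, P_XZ, Q_XZ}(R)`: the supremum over finite sets `𝒰`
(represented by `Fin m`) and channels `P_{U|X}` with `I_P(U;X|Y) ≤ R` and `I_P(U;X|Z) ≤ R`
of `∑_u P_U(u) f(P_{X|U}(·|u))`. -/
def Gexp {X Y Z : Type*} [Fintype X] [Fintype Y] [Fintype Z]
    (pXY : X × Y → ℝ) (qXY : X × Y → ℝ) (pXZ : X × Z → ℝ) (qXZ : X × Z → ℝ)
    (R : ℝ) : EReal :=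
  sSup {v : EReal | ∃ (m : ℕ) (ch : X → Fin m → ℝ),
    (∀ x, IsPMF (ch x)) ∧
    condMI (fun w : Fin m × X × Y => ch w.2.1 w.1 * pXY (w.2.1, w.2.2))
      (fun w => w.1) (fun w => w.2.1) (fun w => w.2.2) ≤ R ∧
    condMI (fun w : Fin m × X × Z => ch w.2.1 w.1 * pXZ (w.2.1, w.2.2))
      (fun w => w.1) (fun w => w.2.1) (fun w => w.2.2) ≤ R ∧
    v = ∑ u : Fin m,
      ((∑ x, ch x u * margFst pXY x : ℝ) : EReal) *
        fdiff (condSnd pXY) (condSnd pXZ) (condSnd qXY) (condSnd qXZ)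
          (margFst qXY)
          (fun x => ch x u * margFst pXY x / ∑ x', ch x' u * margFst pXY x')}

/-- The error exponent of distributed hypothesis testing, via the Ahlswede–Csiszár
multi-letter characterization. -/
def errExp {X W : Type*} [Fintype X] [Fintype W]
    (pXW qXW : X × W → ℝ) (R : ℝ) : EReal :=
  sSup {v : EReal | ∃ n : ℕ, 0 < n ∧
    ∃ κ : (Fin n → X) → Fin (2 ^ ⌊(n : ℝ) * R⌋₊) → ℝ,
      (∀ x, IsPMF (κ x)) ∧
      v = (((n : ℝ)⁻¹ : ℝ) : EReal) *
        klDiv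
          (fun mw : Fin (2 ^ ⌊(n : ℝ) * R⌋₊) × (Fin n → W) =>
            ∑ x : Fin n → X, (∏ i, pXW (x i, mw.2 i)) * κ x mw.1)
          (fun mw : Fin (2 ^ ⌊(n : ℝ) * R⌋₊) × (Fin n → W) =>
            ∑ x : Fin n → X, (∏ i, qXW (x i, mw.2 i)) * κ x mw.1)}

/-!
An encoder message `M` computed from `X^n` leaves `Q` conditionally independent: it is the law
`P_{M J^n Z^n} P_{Ŷ^n Z^n} / P_{Z^n}`, so the divergence of a block code is exactly
`I_P(Ŷ^n; (M, J^n) | Z^n)`. On the other hand `I_P(M; X^n | Z^n, J^n) ≤ nR`.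

Single-letterization works with the pairs `(H(X | U, C), H(Ŷ | U, C))`, `C = (Z, J)`. For a product
of two sources, the chain rule splits `H(X₁ X₂ | U, C₁ C₂)` as `H(X₁ | U C₂, C₁)` plus
`H(X₂ | U X₁ C₁, C₂)`, and conditioning on `X₁` as well shows that the same auxiliary variables
`(U, C₂)` and `(U, ω₁)`, with `ω₁` the whole first outcome, can only decrease `H(Ŷ₁ Ŷ₂ | U, C₁ C₂)`.
Here `X₁` absorbs the dependence between `U` and `ω₁`, which is why replacing `X₁ C₁` by `ω₁` costs
nothing. Peeling off one coordinate at a time and mixing the resulting `n` auxiliary variables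
uniformly yields a channel attaining at least the block value `(1 / n) I_P(Ŷ^n; (M, J^n) | Z^n)`,
with exactly the average rate `(1 / n) I_P(M; X^n | Z^n, J^n)`.
-/

section Pushforward

variable {Ω α β γ ι : Type*} [Fintype Ω]

lemma pushf_nonneg {p : Ω → ℝ} (hp : 0 ≤ p) (A : Ω → α) : 0 ≤ pushf p A := fun _ =>
  Finset.sum_nonneg fun ω _ => by split_ifs; exacts [hp ω, le_rfl]

lemma pushf_apply_congr (p : Ω → ℝ) {A : Ω → α} {B : Ω → β} {a : α} {b : β}
    (h : ∀ ω, A ω = a ↔ B ω = b) : pushf p A a = pushf p B b := by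
  classical
  simp only [pushf, h]

lemma pushf_apply_le_pushf_apply {p : Ω → ℝ} (hp : 0 ≤ p) {A : Ω → α} {B : Ω → β} {a : α} {b : β}
    (h : ∀ ω, A ω = a → B ω = b) : pushf p A a ≤ pushf p B b :=
  Finset.sum_le_sum fun ω _ => by
    split_ifs with ha hb
    exacts [le_rfl, absurd (h ω ha) hb, hp ω, le_rfl]

lemma pushf_id (p : Ω → ℝ) : pushf p id = p := by
  classical
  funext ω
  simp [pushf]

lemma pushf_apply_of_injective (p : Ω → ℝ) {A : Ω → α} (hA : A.Injective) (ω : Ω) :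
    pushf p A (A ω) = p ω :=
  (pushf_apply_congr p fun _ => hA.eq_iff).trans (congrFun (pushf_id p) ω)

lemma apply_le_pushf_apply {p : Ω → ℝ} (hp : 0 ≤ p) (A : Ω → α) (ω : Ω) :
    p ω ≤ pushf p A (A ω) :=
  (congrFun (pushf_id p) ω).ge.trans <| pushf_apply_le_pushf_apply hp fun _ h => congrArg A h

lemma pushf_const_mul (k : ℝ) (p : Ω → ℝ) (A : Ω → α) :
    pushf (fun ω => k * p ω) A = fun a => k * pushf p A a := by
  funext a
  simp only [pushf, Finset.mul_sum, mul_ite, mul_zero]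

lemma pushf_comp_equiv {Ω' : Type*} [Fintype Ω'] (e : Ω' ≃ Ω) (p : Ω → ℝ) (A : Ω → α) :
    pushf (p ∘ e) (A ∘ e) = pushf p A := by
  classical
  funext a
  exact e.sum_comp fun ω => if A ω = a then p ω else 0

lemma pushf_fst_comp_snd [Fintype ι] (p : ι × Ω → ℝ) (A : Ω → α) (i : ι) (a : α) :
    pushf p (fun w => (w.1, A w.2)) (i, a) = pushf (fun ω => p (i, ω)) A a := by
  classical
  rw [pushf, Fintype.sum_prod_type, Fintype.sum_eq_single i fun j hj => by simp [hj]]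
  simp [pushf]

variable [Fintype α]

lemma sum_pushf_mul (p : Ω → ℝ) (A : Ω → α) (g : α → ℝ) :
    ∑ a, pushf p A a * g a = ∑ ω, p ω * g (A ω) := by
  classical
  simp only [pushf, Finset.sum_mul, ite_mul, zero_mul]
  rw [Finset.sum_comm]
  simp

lemma sum_pushf (p : Ω → ℝ) (A : Ω → α) : ∑ a, pushf p A a = ∑ ω, p ω := by
  simpa using sum_pushf_mul p A 1

lemma pushf_pushf (p : Ω → ℝ) (A : Ω → α) (B : α → β) :
    pushf (pushf p A) B = pushf p (B ∘ A) := by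
  classical
  funext b
  simpa [pushf] using sum_pushf_mul p A fun a => if B a = b then 1 else 0

lemma sum_pushf_prod_left (p : Ω → ℝ) (A : Ω → α) (C : Ω → γ) (c : γ) :
    ∑ a, pushf p (fun ω => (A ω, C ω)) (a, c) = pushf p C c := by
  classical
  simp only [pushf]
  rw [Finset.sum_comm]
  simp [ite_and]

end Pushforward

section Gibbs

open InformationTheory Real

variable {α : Type*} [Fintype α] {p q : α → ℝ}

lemma sum_mul_log_div_eq_sum_klFun (hpq : ∀ a, q a = 0 → p a = 0) (hsum : ∑ a, p a = ∑ a, q a) :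
    ∑ a, p a * log (p a / q a) = ∑ a, q a * klFun (p a / q a) := by
  have hterm (a : α) : q a * klFun (p a / q a) = p a * log (p a / q a) + (q a - p a) := by
    by_cases hq : q a = 0
    · simp [hq, hpq a hq]
    · rw [klFun_apply]
      field_simp
      ring
  simp_rw [hterm, Finset.sum_add_distrib, Finset.sum_sub_distrib, hsum, sub_self, add_zero]

lemma sum_mul_log_div_nonneg (hp : 0 ≤ p) (hq : 0 ≤ q) (hpq : ∀ a, q a = 0 → p a = 0)
    (hsum : ∑ a, p a = ∑ a, q a) : 0 ≤ ∑ a, p a * log (p a / q a) := by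
  rw [sum_mul_log_div_eq_sum_klFun hpq hsum]
  exact Finset.sum_nonneg fun a _ => mul_nonneg (hq a) (klFun_nonneg (div_nonneg (hp a) (hq a)))

lemma eq_of_sum_mul_log_div_eq_zero (hp : 0 ≤ p) (hq : 0 ≤ q) (hpq : ∀ a, q a = 0 → p a = 0)
    (hsum : ∑ a, p a = ∑ a, q a) (h : ∑ a, p a * log (p a / q a) = 0) : p = q := by
  have hpos (a : α) : 0 ≤ p a / q a := div_nonneg (hp a) (hq a)
  rw [sum_mul_log_div_eq_sum_klFun hpq hsum, Finset.sum_eq_zero_iff_of_nonneg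
    fun a _ => mul_nonneg (hq a) (klFun_nonneg (hpos a))] at h
  funext a
  rcases mul_eq_zero.1 (h a (Finset.mem_univ a)) with hqa | hkl
  · rw [hqa, hpq a hqa]
  · exact eq_of_div_eq_one ((klFun_eq_zero_iff (hpos a)).1 hkl)

end Gibbs

section Entropy

open Real

variable {Ω α β γ α' γ' ι : Type*} [Fintype Ω]
  [Fintype α] [Fintype β] [Fintype γ] [Fintype α'] [Fintype γ'] [Fintype ι]

lemma entropy_eq_sum_negMulLog (p : α → ℝ) : entropy p = ∑ a, negMulLog (p a) := by
  simp [entropy, negMulLog]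

lemma entropy_pushf (p : Ω → ℝ) (A : Ω → α) :
    entropy (pushf p A) = -∑ ω, p ω * log (pushf p A (A ω)) := by
  rw [entropy, sum_pushf_mul p A fun a => log (pushf p A a)]

lemma entropy_pushf_congr (p : Ω → ℝ) {A : Ω → α} {B : Ω → β}
    (h : ∀ ω ω', A ω = A ω' ↔ B ω = B ω') : entropy (pushf p A) = entropy (pushf p B) := by
  simp_rw [entropy_pushf, pushf_apply_congr p fun ω => h ω _]

lemma entropy_const_mul (k : ℝ) (p : α → ℝ) :
    entropy (fun a => k * p a) = k * entropy p + (∑ a, p a) * negMulLog k := by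
  simp only [entropy_eq_sum_negMulLog, negMulLog_mul, Finset.sum_add_distrib, Finset.mul_sum,
    Finset.sum_mul]
  ring

lemma entropy_pushf_fst_comp_snd (p : ι × Ω → ℝ) (C : Ω → γ) :
    entropy (pushf p fun w => (w.1, C w.2)) = ∑ i, entropy (pushf (fun ω => p (i, ω)) C) := by
  simp only [entropy, Fintype.sum_prod_type, pushf_fst_comp_snd, Finset.sum_neg_distrib]

/-- The conditional entropy `H(A|C) = H(A,C) - H(C)` under the mass function `p`, which need not
be normalized: it is homogeneous of degree one in `p`. -/
def condEntropy (p : Ω → ℝ) (A : Ω → α) (C : Ω → γ) : ℝ :=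
  entropy (pushf p fun ω => (A ω, C ω)) - entropy (pushf p C)

lemma condEntropy_eq_sum (p : Ω → ℝ) (A : Ω → α) (C : Ω → γ) :
    condEntropy p A C =
      ∑ ω, p ω * (log (pushf p C (C ω)) - log (pushf p (fun ω => (A ω, C ω)) (A ω, C ω))) := by
  simp only [condEntropy, entropy_pushf, mul_sub, Finset.sum_sub_distrib]
  ring

lemma condEntropy_congr (p : Ω → ℝ) {A : Ω → α} {A' : Ω → α'} {C : Ω → γ} {C' : Ω → γ'}
    (hC : ∀ ω ω', C ω = C ω' ↔ C' ω = C' ω')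
    (hA : ∀ ω ω', C ω = C ω' → (A ω = A ω' ↔ A' ω = A' ω')) :
    condEntropy p A C = condEntropy p A' C' := by
  rw [condEntropy, condEntropy, entropy_pushf_congr p hC,
    entropy_pushf_congr p (B := fun ω => (A' ω, C' ω)) fun ω ω' => ?_]
  simpa only [Prod.mk.injEq, ← hC] using and_congr_left (hA ω ω')

lemma condEntropy_pushf {Ω' : Type*} [Fintype Ω'] (p : Ω → ℝ) (F : Ω → Ω') (A : Ω' → α)
    (C : Ω' → γ) : condEntropy (pushf p F) A C = condEntropy p (A ∘ F) (C ∘ F) := by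
  simp only [condEntropy, pushf_pushf, Function.comp_def]

lemma condEntropy_comp_equiv {Ω' : Type*} [Fintype Ω'] (e : Ω' ≃ Ω) (p : Ω → ℝ) (A : Ω → α)
    (C : Ω → γ) :
    condEntropy (fun ω => p (e ω)) (fun ω => A (e ω)) (fun ω => C (e ω)) = condEntropy p A C := by
  rw [condEntropy, condEntropy, ← pushf_comp_equiv e p C, ← pushf_comp_equiv e p]
  rfl

lemma condEntropy_const_mul (k : ℝ) (p : Ω → ℝ) (A : Ω → α) (C : Ω → γ) :
    condEntropy (fun ω => k * p ω) A C = k * condEntropy p A C := by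
  simp only [condEntropy, pushf_const_mul, entropy_const_mul, sum_pushf]
  ring

lemma condEntropy_prod (p : Ω → ℝ) (A : Ω → α) (B : Ω → β) (C : Ω → γ) :
    condEntropy p (fun ω => (A ω, B ω)) C =
      condEntropy p A C + condEntropy p B (fun ω => (A ω, C ω)) := by
  simp only [condEntropy]
  rw [entropy_pushf_congr p (A := fun ω => ((A ω, B ω), C ω)) (B := fun ω => (B ω, A ω, C ω))
    fun ω ω' => by simp only [Prod.mk.injEq]; tauto]
  ring

lemma condEntropy_comp_snd_fst (p : ι × Ω → ℝ) (A : Ω → α) (C : Ω → γ) :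
    condEntropy p (fun w => A w.2) (fun w => (w.1, C w.2)) =
      ∑ i, condEntropy (fun ω => p (i, ω)) A C := by
  simp only [condEntropy, Finset.sum_sub_distrib, ← entropy_pushf_fst_comp_snd]
  rw [entropy_pushf_congr p (A := fun w => (A w.2, w.1, C w.2)) (B := fun w => (w.1, A w.2, C w.2))
    fun w w' => by simp only [Prod.mk.injEq]; tauto]

lemma condEntropy_nonneg {p : Ω → ℝ} (hp : 0 ≤ p) (A : Ω → α) (C : Ω → γ) :
    0 ≤ condEntropy p A C := by
  rw [condEntropy_eq_sum]
  refine Finset.sum_nonneg fun ω _ => ?_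
  rcases (hp ω).eq_or_lt with h | h
  · simp [← h]
  have hAC : 0 < pushf p (fun ω => (A ω, C ω)) (A ω, C ω) :=
    h.trans_le (apply_le_pushf_apply hp (fun ω => (A ω, C ω)) ω)
  exact mul_nonneg h.le <| sub_nonneg.2 <| log_le_log hAC <|
    pushf_apply_le_pushf_apply hp fun ω' h => (Prod.mk.inj h).2

end Entropy

section MarkovLaw

variable {Ω α β γ : Type*} [Fintype Ω] {p : Ω → ℝ} {A : Ω → α} {B : Ω → β} {C : Ω → γ}

/-- The law `P_{BC} P_{AC} / P_C` under which `A` and `B` are conditionally independent given `C`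
while `(B, C)` and `(A, C)` keep their laws under `p`. It is expressed as a mass function on `Ω`,
which is meaningful when `(A, B, C)` is a bijective labelling of `Ω`. -/
def markovLaw (p : Ω → ℝ) (A : Ω → α) (B : Ω → β) (C : Ω → γ) : Ω → ℝ := fun ω =>
  pushf p (fun ω => (B ω, C ω)) (B ω, C ω) * pushf p (fun ω => (A ω, C ω)) (A ω, C ω) /
    pushf p C (C ω)

lemma markovLaw_congr {β' : Type*} {B' : Ω → β'} (h : ∀ ω ω', B ω = B ω' ↔ B' ω = B' ω') :
    markovLaw p A B C = markovLaw p A B' C := by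
  funext ω
  rw [markovLaw, markovLaw, pushf_apply_congr p (B := fun ω => (B' ω, C ω)) (b := (B' ω, C ω))
    fun ω' => by simp only [Prod.mk.injEq, h]]

lemma markovLaw_nonneg (hp : 0 ≤ p) : 0 ≤ markovLaw p A B C := fun _ =>
  div_nonneg (mul_nonneg (pushf_nonneg hp _ _) (pushf_nonneg hp _ _)) (pushf_nonneg hp _ _)

lemma eq_zero_of_markovLaw_eq_zero (hp : 0 ≤ p) (ω : Ω) (h : markovLaw p A B C ω = 0) :
    p ω = 0 := by
  refine le_antisymm ?_ (hp ω)
  have hBC := apply_le_pushf_apply hp (fun ω => (B ω, C ω)) ω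
  have hAC := apply_le_pushf_apply hp (fun ω => (A ω, C ω)) ω
  have hC := apply_le_pushf_apply hp C ω
  rcases div_eq_zero_iff.1 h with h | h
  · rcases mul_eq_zero.1 h with h | h
    exacts [hBC.trans_eq h, hAC.trans_eq h]
  · exact hC.trans_eq h

lemma sum_markovLaw [Finite α] [Finite β] [Finite γ]
    (hABC : (fun ω => (A ω, B ω, C ω)).Bijective) :
    ∑ ω, markovLaw p A B C ω = ∑ ω, p ω := by
  have := Fintype.ofFinite α
  have := Fintype.ofFinite β
  have := Fintype.ofFinite γ
  set pBC := pushf p fun ω => (B ω, C ω)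
  set pAC := pushf p fun ω => (A ω, C ω)
  set pC := pushf p C with hpC
  calc ∑ ω, markovLaw p A B C ω
      = ∑ t : α × β × γ, pBC (t.2.1, t.2.2) * pAC (t.1, t.2.2) / pC t.2.2 :=
        hABC.sum_comp fun t => pBC (t.2.1, t.2.2) * pAC (t.1, t.2.2) / pC t.2.2
    _ = ∑ c, (∑ b, pBC (b, c)) * (∑ a, pAC (a, c)) / pC c := by
        simp_rw [Fintype.sum_prod_type, Finset.sum_mul_sum, Finset.sum_div]
        rw [Finset.sum_comm]
        simp_rw [Finset.sum_comm (s := Finset.univ (α := α))]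
        exact Finset.sum_comm
    _ = ∑ ω, p ω := by
        simp only [pBC, pAC, sum_pushf_prod_left, ← hpC, mul_self_div_self]
        exact sum_pushf p C

end MarkovLaw

section MutualInformation

open Real

variable {Ω α β γ : Type*} [Fintype Ω] [Fintype α] [Fintype β] [Fintype γ]

lemma condMI_eq_condEntropy_sub (p : Ω → ℝ) (A : Ω → α) (B : Ω → β) (C : Ω → γ) :
    condMI p A B C = condEntropy p A C - condEntropy p A (fun ω => (B ω, C ω)) := by
  rw [condMI, condEntropy, condEntropy]
  ring

lemma condMI_comm (p : Ω → ℝ) (A : Ω → α) (B : Ω → β) (C : Ω → γ) :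
    condMI p A B C = condMI p B A C := by
  rw [condMI, condMI, entropy_pushf_congr p (A := fun ω => (A ω, B ω, C ω))
    (B := fun ω => (B ω, A ω, C ω)) fun ω ω' => by simp only [Prod.mk.injEq]; tauto]
  ring

lemma condMI_pushf {Ω' : Type*} [Fintype Ω'] (p : Ω → ℝ) (F : Ω → Ω') (A : Ω' → α) (B : Ω' → β)
    (C : Ω' → γ) : condMI (pushf p F) A B C = condMI p (A ∘ F) (B ∘ F) (C ∘ F) := by
  simp only [condMI_eq_condEntropy_sub, condEntropy_pushf, Function.comp_def]

variable {p : Ω → ℝ} {A : Ω → α} {B : Ω → β} {C : Ω → γ}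

lemma sum_mul_log_div_markovLaw (hp : 0 ≤ p) (hABC : (fun ω => (A ω, B ω, C ω)).Injective) :
    ∑ ω, p ω * log (p ω / markovLaw p A B C ω) = condMI p A B C := by
  simp only [condMI, entropy_pushf, pushf_apply_of_injective p hABC]
  rw [← sub_eq_zero]
  simp only [sub_neg_eq_add, ← Finset.sum_neg_distrib, ← Finset.sum_add_distrib,
    ← Finset.sum_sub_distrib]
  refine Finset.sum_eq_zero fun ω _ => ?_
  rcases (hp ω).eq_or_lt with h | h
  · simp [← h]
  have hBC := h.trans_le (apply_le_pushf_apply hp (fun ω => (B ω, C ω)) ω)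
  have hAC := h.trans_le (apply_le_pushf_apply hp (fun ω => (A ω, C ω)) ω)
  have hC := h.trans_le (apply_le_pushf_apply hp C ω)
  rw [markovLaw, log_div h.ne' (div_pos (mul_pos hBC hAC) hC).ne',
    log_div (mul_pos hBC hAC).ne' hC.ne', log_mul hBC.ne' hAC.ne']
  ring

lemma klDiv_markovLaw (hp : 0 ≤ p) (hABC : (fun ω => (A ω, B ω, C ω)).Injective) :
    klDiv p (markovLaw p A B C) = condMI p A B C := by
  rw [klDiv, if_pos (eq_zero_of_markovLaw_eq_zero hp), sum_mul_log_div_markovLaw hp hABC]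

lemma eq_markovLaw_of_condMI_eq_zero (hp : 0 ≤ p)
    (hABC : (fun ω => (A ω, B ω, C ω)).Bijective) (h : condMI p A B C = 0) :
    p = markovLaw p A B C :=
  eq_of_sum_mul_log_div_eq_zero hp (markovLaw_nonneg hp) (eq_zero_of_markovLaw_eq_zero hp)
    (sum_markovLaw hABC).symm ((sum_mul_log_div_markovLaw hp hABC.injective).trans h)

lemma eq_markovLaw_of_pushf_eq {q : Ω → ℝ} (hq : 0 ≤ q)
    (hABC : (fun ω => (A ω, B ω, C ω)).Bijective) (h : condMI q A B C = 0)
    (hAC : pushf p (fun ω => (A ω, C ω)) = pushf q (fun ω => (A ω, C ω)))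
    (hBC : pushf p (fun ω => (B ω, C ω)) = pushf q (fun ω => (B ω, C ω))) :
    q = markovLaw p A B C := by
  have hC : pushf p C = pushf q C := by
    simpa only [pushf_pushf] using! congrArg (pushf · Prod.snd) hAC
  calc q = markovLaw q A B C := eq_markovLaw_of_condMI_eq_zero hq hABC h
    _ = markovLaw p A B C := by unfold markovLaw; rw [hAC, hBC, hC]

lemma condMI_nonneg (hp : 0 ≤ p) (A : Ω → α) (B : Ω → β) (C : Ω → γ) : 0 ≤ condMI p A B C := by
  set P : α × β × γ → ℝ := pushf p fun ω => (A ω, B ω, C ω)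
  have hP : 0 ≤ P := pushf_nonneg hp _
  calc 0 ≤ ∑ t, P t * log (P t / markovLaw P Prod.fst (fun t => t.2.1) (fun t => t.2.2) t) :=
        sum_mul_log_div_nonneg hP (markovLaw_nonneg hP) (eq_zero_of_markovLaw_eq_zero hP)
          (sum_markovLaw Function.bijective_id).symm
    _ = condMI P Prod.fst (fun t => t.2.1) (fun t => t.2.2) :=
        sum_mul_log_div_markovLaw hP Function.injective_id
    _ = condMI p A B C := condMI_pushf p _ _ _ _

lemma condEntropy_prod_le (hp : 0 ≤ p) (A : Ω → α) (B : Ω → β) (C : Ω → γ) :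
    condEntropy p A (fun ω => (B ω, C ω)) ≤ condEntropy p A C :=
  sub_nonneg.1 (condMI_eq_condEntropy_sub p A B C ▸ condMI_nonneg hp A B C)

lemma condEntropy_le_log_card [Nonempty α] (hp : 0 ≤ p) (A : Ω → α) (C : Ω → γ) :
    condEntropy p A C ≤ (∑ ω, p ω) * log (Fintype.card α) := by
  set pAC := pushf p fun ω => (A ω, C ω)
  set pC := pushf p C
  have hcard : (0 : ℝ) < Fintype.card α := by exact_mod_cast Fintype.card_pos
  have habs (t : α × γ) (ht : pC t.2 / Fintype.card α = 0) : pAC t = 0 := by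
    have hC : pC t.2 = 0 := (div_eq_zero_iff.1 ht).resolve_right hcard.ne'
    refine le_antisymm (hC ▸ ?_) (pushf_nonneg hp _ _)
    exact pushf_apply_le_pushf_apply hp fun _ h => congrArg Prod.snd h
  have hsum : ∑ t, pAC t = ∑ t : α × γ, pC t.2 / Fintype.card α := by
    rw [sum_pushf, Fintype.sum_prod_type_right]
    simp only [Finset.sum_const, Finset.card_univ, nsmul_eq_mul, mul_div_cancel₀ _ hcard.ne']
    exact (sum_pushf p C).symm
  have hgibbs := sum_mul_log_div_nonneg (pushf_nonneg hp _)
    (fun t : α × γ => div_nonneg (pushf_nonneg hp C t.2) hcard.le) habs hsum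
  rw [sum_pushf_mul p _ fun t => log (pAC t / (pC t.2 / Fintype.card α))] at hgibbs
  rw [← sub_nonneg, condEntropy_eq_sum, Finset.sum_mul, ← Finset.sum_sub_distrib]
  refine hgibbs.trans_eq (Finset.sum_congr rfl fun ω _ => ?_)
  rcases (hp ω).eq_or_lt with h | h
  · simp [← h]
  have hAC : 0 < pAC (A ω, C ω) := h.trans_le (apply_le_pushf_apply hp (fun ω => (A ω, C ω)) ω)
  have hC : 0 < pC (C ω) := h.trans_le (apply_le_pushf_apply hp C ω)
  rw [log_div hAC.ne' (by positivity), log_div hC.ne' hcard.ne']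
  ring

lemma condMI_le_log_card [Nonempty α] (hp : 0 ≤ p) (A : Ω → α) (B : Ω → β) (C : Ω → γ) :
    condMI p A B C ≤ (∑ ω, p ω) * log (Fintype.card α) := by
  rw [condMI_eq_condEntropy_sub]
  exact (sub_le_self _ (condEntropy_nonneg hp A _)).trans (condEntropy_le_log_card hp A C)

end MutualInformation

section AuxiliaryVariable

variable {Ω 𝒳 𝒲 α β γ ι : Type*}

/-- The joint law of `(U, ω)` when `ω` has law `p` and `U` is the output of the channel `ch` fed
with `X ω`. Both the encoder message and the auxiliary variable of the theorem are such `U`. -/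
def withAux (ch : 𝒳 → ι → ℝ) (X : Ω → 𝒳) (p : Ω → ℝ) : ι × Ω → ℝ := fun w =>
  ch (X w.2) w.1 * p w.2

lemma withAux_nonneg {ch : 𝒳 → ι → ℝ} {p : Ω → ℝ} (hch : ∀ x u, 0 ≤ ch x u) (X : Ω → 𝒳)
    (hp : 0 ≤ p) : 0 ≤ withAux ch X p := fun w =>
  mul_nonneg (hch _ _) (hp w.2)

variable [Fintype Ω] [Fintype ι] {ch : 𝒳 → ι → ℝ}

lemma pushf_withAux_comp_snd (hch : ∀ x, ∑ u, ch x u = 1) (X : Ω → 𝒳) (p : Ω → ℝ) (A : Ω → α) :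
    pushf (withAux ch X p) (fun w => A w.2) = pushf p A := by
  funext a
  simp only [pushf, withAux, Fintype.sum_prod_type_right]
  refine Finset.sum_congr rfl fun ω _ => ?_
  split_ifs
  · rw [← Finset.sum_mul, hch, one_mul]
  · exact Finset.sum_const_zero

lemma sum_withAux (hch : ∀ x, ∑ u, ch x u = 1) (X : Ω → 𝒳) (p : Ω → ℝ) :
    ∑ w, withAux ch X p w = ∑ ω, p ω := by
  simp_rw [Fintype.sum_prod_type_right, withAux, ← Finset.sum_mul, hch, one_mul]

section CondMI

variable [Fintype α] [Fintype β] [Fintype γ]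

lemma condEntropy_withAux_comp_snd (hch : ∀ x, ∑ u, ch x u = 1) (X : Ω → 𝒳) (p : Ω → ℝ)
    (A : Ω → α) (C : Ω → γ) :
    condEntropy (withAux ch X p) (fun w => A w.2) (fun w => C w.2) = condEntropy p A C := by
  rw [condEntropy, condEntropy, pushf_withAux_comp_snd hch,
    pushf_withAux_comp_snd hch X p fun ω => (A ω, C ω)]

lemma condMI_withAux_left (hch : ∀ x, ∑ u, ch x u = 1) (X : Ω → 𝒳) (p : Ω → ℝ) (A : Ω → α)
    (C : Ω → γ) :
    condMI (withAux ch X p) Prod.fst (fun w => A w.2) (fun w => C w.2) =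
      condEntropy p A C - ∑ u, condEntropy (fun ω => ch (X ω) u * p ω) A C := by
  rw [condMI_comm, condMI_eq_condEntropy_sub, condEntropy_comp_snd_fst,
    condEntropy_withAux_comp_snd hch]
  rfl

lemma condMI_withAux_right (hch : ∀ x, ∑ u, ch x u = 1) (X : Ω → 𝒳) (p : Ω → ℝ) (A : Ω → α)
    (B : Ω → β) (C : Ω → γ) :
    condMI (withAux ch X p) (fun w => A w.2) (fun w => (w.1, B w.2)) (fun w => C w.2) =
      condEntropy p A C -
        ∑ u, condEntropy (fun ω => ch (X ω) u * p ω) A (fun ω => (C ω, B ω)) := by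
  rw [condMI_eq_condEntropy_sub, condEntropy_withAux_comp_snd hch,
    condEntropy_congr (withAux ch X p) (A' := fun w => A w.2)
    (C := fun w => ((w.1, B w.2), C w.2)) (C' := fun w => (w.1, C w.2, B w.2))
    (fun w w' => by simp only [Prod.mk.injEq]; tauto) (fun _ _ _ => Iff.rfl),
    condEntropy_comp_snd_fst _ A fun ω => (C ω, B ω)]
  rfl

end CondMI

lemma pushf_withAux_fst [Fintype 𝒳] (ch : 𝒳 → ι → ℝ) (X : Ω → 𝒳) (p : Ω → ℝ) (W : Ω → 𝒲) (u : ι)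
    (w : 𝒲) :
    pushf (withAux ch X p) (fun t => (t.1, W t.2)) (u, w) =
      ∑ x, pushf p (fun ω => (X ω, W ω)) (x, w) * ch x u := by
  classical
  rw [pushf_fst_comp_snd]
  simp only [pushf, withAux, Finset.sum_mul]
  rw [Finset.sum_comm]
  simp [ite_and, mul_comm]

lemma pushf_withAux_markovLaw [Finite 𝒳] [Fintype 𝒲] (hch : ∀ x, ∑ u, ch x u = 1) {X : Ω → 𝒳}
    {W : Ω → 𝒲} (hXW : (fun ω => (X ω, W ω)).Bijective) (p : Ω → ℝ) (A : 𝒲 → α) (B : 𝒲 → β)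
    (C : 𝒲 → γ) :
    pushf (withAux ch X (markovLaw p (fun ω => A (W ω)) (fun ω => (X ω, B (W ω))) fun ω => C (W ω)))
        (fun t => (t.1, W t.2)) =
      markovLaw (pushf (withAux ch X p) fun t => (t.1, W t.2))
        (fun uw => A uw.2) (fun uw => (uw.1, B uw.2)) (fun uw => C uw.2) := by
  have := Fintype.ofFinite 𝒳
  funext ⟨u, w⟩
  have hlaw (x : 𝒳) :
      pushf (markovLaw p (fun ω => A (W ω)) (fun ω => (X ω, B (W ω))) fun ω => C (W ω))
          (fun ω => (X ω, W ω)) (x, w) =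
        pushf p (fun ω => (X ω, B (W ω), C (W ω))) (x, B w, C w) *
          pushf p (fun ω => (A (W ω), C (W ω))) (A w, C w) /
            pushf p (fun ω => C (W ω)) (C w) := by
    obtain ⟨ω, hω⟩ := hXW.surjective (x, w)
    obtain ⟨rfl, rfl⟩ := Prod.mk.inj hω
    rw [pushf_apply_of_injective _ hXW.injective, markovLaw]
    congr 2
    exact pushf_apply_congr p fun _ => by simp only [Prod.mk.injEq]; tauto
  have hUBC : pushf (withAux ch X p) (fun t => ((t.1, B (W t.2)), C (W t.2))) ((u, B w), C w) =
      ∑ x, pushf p (fun ω => (X ω, B (W ω), C (W ω))) (x, B w, C w) * ch x u := by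
    rw [← pushf_withAux_fst ch X p fun ω => (B (W ω), C (W ω))]
    exact pushf_apply_congr _ fun _ => by simp only [Prod.mk.injEq]; tauto
  rw [pushf_withAux_fst]
  simp only [hlaw]
  simp only [markovLaw, pushf_pushf, Function.comp_def, hUBC, Finset.sum_mul, Finset.sum_div,
    pushf_withAux_comp_snd hch X p fun ω => C (W ω),
    pushf_withAux_comp_snd hch X p fun ω => (A (W ω), C (W ω))]
  exact Finset.sum_congr rfl fun x _ => by ring

lemma klDiv_pushf_withAux_markovLaw [Finite 𝒳] [Fintype 𝒲] [Fintype α] [Fintype β] [Fintype γ]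
    (hch : ∀ x, IsPMF (ch x)) {p : Ω → ℝ} (hp : 0 ≤ p) {X : Ω → 𝒳} {W : Ω → 𝒲}
    (hXW : (fun ω => (X ω, W ω)).Bijective) {A : 𝒲 → α} {B : 𝒲 → β} {C : 𝒲 → γ}
    (hABC : (fun w => (A w, B w, C w)).Injective) :
    klDiv (pushf (withAux ch X p) fun t => (t.1, W t.2))
        (pushf (withAux ch X (markovLaw p (fun ω => A (W ω)) (fun ω => (X ω, B (W ω)))
          fun ω => C (W ω))) fun t => (t.1, W t.2)) =
      condMI (withAux ch X p) (fun t => A (W t.2)) (fun t => (t.1, B (W t.2)))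
        (fun t => C (W t.2)) := by
  have hinj : (fun uw : ι × 𝒲 => (A uw.2, (uw.1, B uw.2), C uw.2)).Injective := by
    rintro ⟨u, w⟩ ⟨u', w'⟩ h
    simp only [Prod.mk.injEq] at h
    exact Prod.ext h.2.1.1 (hABC (by simp only [h]))
  rw [pushf_withAux_markovLaw (fun x => (hch x).2) hXW, klDiv_markovLaw
    (pushf_nonneg (withAux_nonneg (fun x => (hch x).1) X hp) _) hinj, condMI_pushf]
  rfl

end AuxiliaryVariable

section Product

variable {Ω₁ Ω₂ 𝒳₁ 𝒳₂ α₁ α₂ γ₁ γ₂ δ : Type*}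

/-- The law of two independent outcomes with laws `p₁` and `p₂`. -/
def prodLaw (p₁ : Ω₁ → ℝ) (p₂ : Ω₂ → ℝ) : Ω₁ × Ω₂ → ℝ := fun ω => p₁ ω.1 * p₂ ω.2

/-- The weight on `x₁` left by the weight `w` on pairs after observing `C₂ = c₂`. -/
def fstWeight [Fintype Ω₂] (w : 𝒳₁ × 𝒳₂ → ℝ) (X₂ : Ω₂ → 𝒳₂) (p₂ : Ω₂ → ℝ) (C₂ : Ω₂ → γ₂) (c₂ : γ₂) :
    𝒳₁ → ℝ := fun x₁ =>
  pushf (fun ω₂ => w (x₁, X₂ ω₂) * p₂ ω₂) C₂ c₂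

/-- The weight on `x₂` left by the weight `w` on pairs after observing the first outcome `ω₁`. -/
def sndWeight (w : 𝒳₁ × 𝒳₂ → ℝ) (X₁ : Ω₁ → 𝒳₁) (p₁ : Ω₁ → ℝ) (ω₁ : Ω₁) : 𝒳₂ → ℝ := fun x₂ =>
  p₁ ω₁ * w (X₁ ω₁, x₂)

lemma fstWeight_nonneg [Fintype Ω₂] {w : 𝒳₁ × 𝒳₂ → ℝ} (hw : 0 ≤ w) (X₂ : Ω₂ → 𝒳₂) {p₂ : Ω₂ → ℝ}
    (hp₂ : 0 ≤ p₂) (C₂ : Ω₂ → γ₂) (c₂ : γ₂) : 0 ≤ fstWeight w X₂ p₂ C₂ c₂ := fun x₁ =>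
  pushf_nonneg (p := fun ω₂ => w (x₁, X₂ ω₂) * p₂ ω₂) (fun _ => mul_nonneg (hw _) (hp₂ _)) C₂ c₂

lemma sndWeight_nonneg {w : 𝒳₁ × 𝒳₂ → ℝ} (hw : 0 ≤ w) (X₁ : Ω₁ → 𝒳₁) {p₁ : Ω₁ → ℝ} (hp₁ : 0 ≤ p₁)
    (ω₁ : Ω₁) : 0 ≤ sndWeight w X₁ p₁ ω₁ := fun _ =>
  mul_nonneg (hp₁ ω₁) (hw _)

variable [Fintype Ω₁] [Fintype Ω₂] {w : 𝒳₁ × 𝒳₂ → ℝ} {p₁ : Ω₁ → ℝ} {p₂ : Ω₂ → ℝ}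
  {X₁ : Ω₁ → 𝒳₁} {X₂ : Ω₂ → 𝒳₂} {A₁ : Ω₁ → α₁} {A₂ : Ω₂ → α₂} {C₁ : Ω₁ → γ₁} {C₂ : Ω₂ → γ₂}

variable [Fintype α₁] [Fintype α₂] [Fintype γ₁] [Fintype γ₂]

lemma condEntropy_fst_prodLaw :
    condEntropy (fun ω => w (X₁ ω.1, X₂ ω.2) * prodLaw p₁ p₂ ω) (fun ω => A₁ ω.1)
        (fun ω => (C₂ ω.2, C₁ ω.1)) =
      ∑ c₂, condEntropy (fun ω₁ => fstWeight w X₂ p₂ C₂ c₂ (X₁ ω₁) * p₁ ω₁) A₁ C₁ := by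
  have hlaw (c₂ : γ₂) (ω₁ : Ω₁) :
      pushf (fun ω => w (X₁ ω.1, X₂ ω.2) * prodLaw p₁ p₂ ω) (fun ω => (C₂ ω.2, ω.1)) (c₂, ω₁) =
        fstWeight w X₂ p₂ C₂ c₂ (X₁ ω₁) * p₁ ω₁ := by
    rw [pushf_apply_congr _ (B := fun ω => (ω.1, C₂ ω.2)) (b := (ω₁, c₂))
      fun _ => by simp only [Prod.mk.injEq]; tauto, pushf_fst_comp_snd, mul_comm, fstWeight,
      ← congrFun (pushf_const_mul ..) c₂]
    simp only [prodLaw, mul_left_comm]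
  simp only [← hlaw]
  rw [← condEntropy_comp_snd_fst, condEntropy_pushf]
  rfl

lemma condEntropy_snd_prodLaw [Fintype δ] {D₁ : Ω₁ → δ} {ξ : δ → 𝒳₁}
    (hD₁ : ∀ ω₁, ξ (D₁ ω₁) = X₁ ω₁) :
    condEntropy (fun ω => w (X₁ ω.1, X₂ ω.2) * prodLaw p₁ p₂ ω) (fun ω => A₂ ω.2)
        (fun ω => (D₁ ω.1, C₂ ω.2)) =
      ∑ ω₁, condEntropy (fun ω₂ => sndWeight w X₁ p₁ ω₁ (X₂ ω₂) * p₂ ω₂) A₂ C₂ := by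
  classical
  have hlaw (d : δ) (ω₂ : Ω₂) :
      pushf (fun ω => w (X₁ ω.1, X₂ ω.2) * prodLaw p₁ p₂ ω) (fun ω => (D₁ ω.1, ω.2)) (d, ω₂) =
        pushf p₁ D₁ d * (w (ξ d, X₂ ω₂) * p₂ ω₂) := by
    simp only [pushf, Fintype.sum_prod_type, Prod.mk.injEq, ite_and, Finset.sum_mul, ite_mul,
      zero_mul]
    refine Finset.sum_congr rfl fun ω₁ _ => ?_
    split_ifs with h
    · simp [← h, hD₁, prodLaw, mul_left_comm]
    · exact Finset.sum_const_zero
  calc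
    _ = condEntropy (pushf (fun ω => w (X₁ ω.1, X₂ ω.2) * prodLaw p₁ p₂ ω)
          fun ω => (D₁ ω.1, ω.2)) (fun t => A₂ t.2) (fun t => (t.1, C₂ t.2)) :=
        (condEntropy_pushf ..).symm
    _ = ∑ d, pushf p₁ D₁ d * condEntropy (fun ω₂ => w (ξ d, X₂ ω₂) * p₂ ω₂) A₂ C₂ := by
        simp only [condEntropy_comp_snd_fst, hlaw, condEntropy_const_mul]
    _ = _ := by
        rw [sum_pushf_mul p₁ D₁ fun d => condEntropy (fun ω₂ => w (ξ d, X₂ ω₂) * p₂ ω₂) A₂ C₂]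
        simp only [hD₁, sndWeight, mul_assoc, condEntropy_const_mul]

lemma condEntropy_prodLaw [Fintype 𝒳₁] [Fintype 𝒳₂] :
    condEntropy (fun ω => w (X₁ ω.1, X₂ ω.2) * prodLaw p₁ p₂ ω) (fun ω => (X₁ ω.1, X₂ ω.2))
        (fun ω => (C₁ ω.1, C₂ ω.2)) =
      ∑ c₂, condEntropy (fun ω₁ => fstWeight w X₂ p₂ C₂ c₂ (X₁ ω₁) * p₁ ω₁) X₁ C₁ +
        ∑ ω₁, condEntropy (fun ω₂ => sndWeight w X₁ p₁ ω₁ (X₂ ω₂) * p₂ ω₂) X₂ C₂ := by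
  rw [condEntropy_prod, ← condEntropy_fst_prodLaw,
    ← condEntropy_snd_prodLaw (D₁ := fun ω₁ => (X₁ ω₁, C₁ ω₁)) (ξ := Prod.fst) fun _ => rfl]
  congr 1 <;>
  exact condEntropy_congr _ (fun ω ω' => by simp only [Prod.mk.injEq]; tauto) fun _ _ _ => Iff.rfl

lemma le_condEntropy_prodLaw [Finite 𝒳₁] (hw : 0 ≤ w) (hp₁ : 0 ≤ p₁) (hp₂ : 0 ≤ p₂) :
    ∑ c₂, condEntropy (fun ω₁ => fstWeight w X₂ p₂ C₂ c₂ (X₁ ω₁) * p₁ ω₁) A₁ C₁ +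
        ∑ ω₁, condEntropy (fun ω₂ => sndWeight w X₁ p₁ ω₁ (X₂ ω₂) * p₂ ω₂) A₂ C₂ ≤
      condEntropy (fun ω => w (X₁ ω.1, X₂ ω.2) * prodLaw p₁ p₂ ω) (fun ω => (A₁ ω.1, A₂ ω.2))
        (fun ω => (C₁ ω.1, C₂ ω.2)) := by
  have := Fintype.ofFinite 𝒳₁
  rw [condEntropy_prod, ← condEntropy_fst_prodLaw, ← condEntropy_snd_prodLaw (X₁ := X₁)
    (D₁ := fun ω₁ => (X₁ ω₁, A₁ ω₁, C₁ ω₁)) (ξ := Prod.fst) fun _ => rfl]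
  set T := fun ω : Ω₁ × Ω₂ => w (X₁ ω.1, X₂ ω.2) * prodLaw p₁ p₂ ω
  have hT : 0 ≤ T := fun ω => mul_nonneg (hw _) (mul_nonneg (hp₁ _) (hp₂ _))
  gcongr ?_ + ?_
  · exact (condEntropy_congr T (fun ω ω' => by simp only [Prod.mk.injEq]; tauto)
      fun _ _ _ => Iff.rfl).le
  · calc
      _ = condEntropy T (fun ω => A₂ ω.2) (fun ω => (X₁ ω.1, A₁ ω.1, C₁ ω.1, C₂ ω.2)) :=
        condEntropy_congr T (fun ω ω' => by simp only [Prod.mk.injEq]; tauto) fun _ _ _ => Iff.rfl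
      _ ≤ _ := condEntropy_prod_le hT _ _ _

end Product

section IID

/-- The law of `n` independent outcomes with law `p`. -/
def iidLaw {Ω : Type*} (p : Ω → ℝ) (n : ℕ) : (Fin n → Ω) → ℝ := fun ω => ∏ i, p (ω i)

variable {Ω 𝒳 α β γ : Type*}

lemma iidLaw_nonneg {p : Ω → ℝ} (hp : 0 ≤ p) (n : ℕ) : 0 ≤ iidLaw p n := fun ω =>
  Finset.prod_nonneg fun i _ => hp (ω i)

lemma iidLaw_cons (p : Ω → ℝ) (n : ℕ) (a : Ω) (ω : Fin n → Ω) :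
    iidLaw p (n + 1) (Fin.cons a ω) = p a * iidLaw p n ω := by
  simp [iidLaw, Fin.prod_univ_succ]

lemma comp_consEquiv (A : Ω → α) (n : ℕ) (ω : Ω × (Fin n → Ω)) :
    A ∘ Fin.consEquiv (fun _ => Ω) ω = Fin.cons (A ω.1) (A ∘ ω.2) :=
  funext <| Fin.cases rfl fun _ => rfl

variable [Fintype Ω]

lemma sum_iidLaw {p : Ω → ℝ} (hp : ∑ ω, p ω = 1) (n : ℕ) : ∑ ω, iidLaw p n ω = 1 := by
  simp only [iidLaw, ← Fintype.sum_pow, hp, one_pow]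

lemma pushf_iidLaw (p : Ω → ℝ) (n : ℕ) (A : Ω → α) :
    pushf (iidLaw p n) (fun ω => A ∘ ω) = iidLaw (pushf p A) n := by
  classical
  funext a
  simp only [pushf, iidLaw, Finset.prod_univ_sum, Fintype.piFinset_univ, Finset.prod_ite_zero,
    Finset.mem_univ, true_imp_iff, funext_iff, Function.comp_apply]

lemma pushf_iidLaw_prod (p : Ω → ℝ) (n : ℕ) (A : Ω → α) (C : Ω → γ) (a : Fin n → α)
    (c : Fin n → γ) :
    pushf (iidLaw p n) (fun ω => (A ∘ ω, C ∘ ω)) (a, c) =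
      ∏ i, pushf p (fun ω => (A ω, C ω)) (a i, c i) := by
  rw [pushf_apply_congr _ (B := fun ω => (fun ω' => (A ω', C ω')) ∘ ω) (b := fun i => (a i, c i))
    fun ω => by simp only [Prod.mk.injEq, funext_iff, Function.comp_apply, forall_and],
    pushf_iidLaw, iidLaw]

lemma iidLaw_markovLaw (p : Ω → ℝ) (n : ℕ) (A : Ω → α) (B : Ω → β) (C : Ω → γ) :
    iidLaw (markovLaw p A B C) n =
      markovLaw (iidLaw p n) (fun ω => A ∘ ω) (fun ω => B ∘ ω) (fun ω => C ∘ ω) := by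
  funext ω
  simp only [markovLaw, pushf_iidLaw_prod, pushf_iidLaw, iidLaw, Finset.prod_div_distrib,
    Finset.prod_mul_distrib, Function.comp_apply]

lemma entropy_iidLaw {p : Ω → ℝ} (hp : ∑ ω, p ω = 1) (n : ℕ) :
    entropy (iidLaw p n) = n * entropy p := by
  induction n with
  | zero => simp [entropy, iidLaw]
  | succ n ih =>
    have hn := sum_iidLaw hp n
    rw [entropy_eq_sum_negMulLog, ← (Fin.consEquiv fun _ => Ω).sum_comp, Fintype.sum_prod_type]
    simp only [Fin.consEquiv, Equiv.coe_fn_mk, iidLaw_cons, Real.negMulLog_mul,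
      Finset.sum_add_distrib, ← Finset.mul_sum, ← Finset.sum_mul, hp, hn,
      ← entropy_eq_sum_negMulLog, ih]
    push_cast
    ring

variable [Fintype α] [Fintype γ]

lemma condEntropy_iidLaw {p : Ω → ℝ} (hp : ∑ ω, p ω = 1) (n : ℕ) (A : Ω → α) (C : Ω → γ) :
    condEntropy (iidLaw p n) (fun ω => A ∘ ω) (fun ω => C ∘ ω) = n * condEntropy p A C := by
  have hentropy {δ : Type _} [Fintype δ] (D : Ω → δ) :
      entropy (pushf (iidLaw p n) fun ω => D ∘ ω) = n * entropy (pushf p D) := by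
    rw [pushf_iidLaw, entropy_iidLaw ((sum_pushf p D).trans hp)]
  rw [condEntropy, condEntropy, entropy_pushf_congr _ (A := fun ω => (A ∘ ω, C ∘ ω))
    (B := fun ω => (fun ω' => (A ω', C ω')) ∘ ω) fun ω ω' => by
      simp only [Prod.mk.injEq, funext_iff, Function.comp_apply, forall_and], hentropy,
    pushf_iidLaw, entropy_iidLaw ((sum_pushf p C).trans hp)]
  ring

lemma condEntropy_iidLaw_succ (p : Ω → ℝ) (n : ℕ) (X : Ω → 𝒳) (w : (Fin (n + 1) → 𝒳) → ℝ)
    (A : Ω → α) (C : Ω → γ) :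
    condEntropy (fun ω => w (X ∘ ω) * iidLaw p (n + 1) ω) (fun ω => A ∘ ω) (fun ω => C ∘ ω) =
      condEntropy (fun ω => w (Fin.cons (X ω.1) (X ∘ ω.2)) * prodLaw p (iidLaw p n) ω)
        (fun ω => (A ω.1, A ∘ ω.2)) (fun ω => (C ω.1, C ∘ ω.2)) := by
  have hlaw (ω : Ω × (Fin n → Ω)) :
      iidLaw p (n + 1) (Fin.consEquiv (fun _ => Ω) ω) = prodLaw p (iidLaw p n) ω :=
    iidLaw_cons p n ω.1 ω.2
  rw [← condEntropy_comp_equiv (Fin.consEquiv fun _ => Ω)]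
  simp only [comp_consEquiv, hlaw]
  exact condEntropy_congr _ (fun ω ω' => by simp only [Fin.cons_inj, Prod.mk.injEq])
    fun _ _ _ => by simp only [Fin.cons_inj, Prod.mk.injEq]

lemma condEntropy_of_subsingleton [Subsingleton Ω] (p : Ω → ℝ) (A : Ω → α) (C : Ω → γ) :
    condEntropy p A C = 0 := by
  rw [condEntropy, sub_eq_zero]
  exact entropy_pushf_congr p fun ω ω' => by simp only [Subsingleton.elim ω ω']
end IID

section Region

variable {Ω 𝒳 α γ : Type*} [Fintype Ω] [Fintype 𝒳] [Fintype α] [Fintype γ]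

/-- A weight `f` on `𝒳` (such as `x ↦ P_{U|X}(u|x)` for a fixed `u`), together with the
contributions `∑ p (f ∘ X) log (1 / p(X | C))` and `∑ p (f ∘ X) log (1 / p(A | C))` it makes to the
conditional entropies of `X` and of `A` given `C`. -/
def entropyPoint (p : Ω → ℝ) (X : Ω → 𝒳) (A : Ω → α) (C : Ω → γ) (f : 𝒳 → ℝ) :
    (𝒳 → ℝ) × ℝ × ℝ :=
  (f, condEntropy (fun ω => f (X ω) * p ω) X C, condEntropy (fun ω => f (X ω) * p ω) A C)

/-- The triples `(∑ u, f u, H(X | U, C), H(A | U, C))` attained by finite families of nonnegative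
weights `f u` on `𝒳`; those with first entry `1` come from the channels `P_{U|X}` with finite `𝒰`.
Allowing any total weight makes the region a monoid, hence stable under conditioning. -/
def auxRegion (p : Ω → ℝ) (X : Ω → 𝒳) (A : Ω → α) (C : Ω → γ) :
    AddSubmonoid ((𝒳 → ℝ) × ℝ × ℝ) :=
  AddSubmonoid.closure (entropyPoint p X A C '' Set.Ici 0)

variable {p : Ω → ℝ} {X : Ω → 𝒳} {A : Ω → α} {C : Ω → γ}

lemma entropyPoint_mem_auxRegion {f : 𝒳 → ℝ} (hf : 0 ≤ f) :
    entropyPoint p X A C f ∈ auxRegion p X A C :=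
  AddSubmonoid.subset_closure ⟨f, hf, rfl⟩

lemma mem_auxRegion_iff {t : (𝒳 → ℝ) × ℝ × ℝ} :
    t ∈ auxRegion p X A C ↔
      ∃ (k : ℕ) (f : Fin k → 𝒳 → ℝ), (∀ u, 0 ≤ f u) ∧
        t = ∑ u, entropyPoint p X A C (f u) := by
  constructor
  · intro ht
    induction ht using AddSubmonoid.closure_induction with
    | mem t ht =>
      obtain ⟨f, hf, rfl⟩ := ht
      exact ⟨1, fun _ => f, fun _ => hf, by simp⟩
    | zero => exact ⟨0, Fin.elim0, fun u => u.elim0, by simp⟩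
    | add s t _ _ hs ht =>
      obtain ⟨k, f, hf, rfl⟩ := hs
      obtain ⟨l, g, hg, rfl⟩ := ht
      refine ⟨k + l, Fin.append f g, fun u => ?_, by simp [Fin.sum_univ_add]⟩
      induction u using Fin.addCases with
      | left u => simpa only [Fin.append_left] using hf u
      | right u => simpa only [Fin.append_right] using hg u
  · rintro ⟨k, f, hf, rfl⟩
    exact sum_mem fun u _ => entropyPoint_mem_auxRegion (hf u)

lemma snd_eq_zero_of_mem_auxRegion [Subsingleton Ω] {t : (𝒳 → ℝ) × ℝ × ℝ}
    (ht : t ∈ auxRegion p X A C) : t.2 = 0 := by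
  obtain ⟨k, f, -, rfl⟩ := mem_auxRegion_iff.1 ht
  simp [entropyPoint, condEntropy_of_subsingleton, Prod.ext_iff, Prod.snd_sum]

lemma exists_mem_auxRegion_of_mem_prodLaw {Ω' 𝒳' α' γ' : Type*} [Fintype Ω'] [Fintype 𝒳']
    [Fintype α'] [Fintype γ'] (hp : 0 ≤ p) {p' : Ω' → ℝ} (hp' : 0 ≤ p') {X' : Ω' → 𝒳'}
    {A' : Ω' → α'} {C' : Ω' → γ'} {t : (𝒳 × 𝒳' → ℝ) × ℝ × ℝ}
    (ht : t ∈ auxRegion (prodLaw p p') (fun ω => (X ω.1, X' ω.2)) (fun ω => (A ω.1, A' ω.2))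
      fun ω => (C ω.1, C' ω.2)) :
    ∃ s ∈ auxRegion p X A C, ∃ s' ∈ auxRegion p' X' A' C',
      (s.1 = fun x => ∑ ω', t.1 (x, X' ω') * p' ω') ∧
      (s'.1 = fun x' => ∑ ω, p ω * t.1 (X ω, x')) ∧
      s.2.1 + s'.2.1 = t.2.1 ∧ s.2.2 + s'.2.2 ≤ t.2.2 := by
  induction ht using AddSubmonoid.closure_induction with
  | mem t ht =>
    obtain ⟨f, hf, rfl⟩ := ht
    refine ⟨∑ c', entropyPoint p X A C (fstWeight f X' p' C' c'),
      sum_mem fun c' _ => entropyPoint_mem_auxRegion <|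
        fstWeight_nonneg hf X' hp' C' c',
      ∑ ω, entropyPoint p' X' A' C' (sndWeight f X p ω),
      sum_mem fun ω _ => entropyPoint_mem_auxRegion <|
        sndWeight_nonneg hf X hp ω, ?_⟩
    simp only [Prod.fst_sum, Prod.snd_sum, entropyPoint]
    refine ⟨?_, ?_, condEntropy_prodLaw.symm, le_condEntropy_prodLaw hf hp hp'⟩
    · funext x
      simp only [Finset.sum_apply, fstWeight, sum_pushf]
    · funext x'
      simp only [Finset.sum_apply, sndWeight]
  | zero => exact ⟨0, zero_mem _, 0, zero_mem _, by simp [funext_iff]⟩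
  | add t u _ _ ht hu =>
    obtain ⟨s, hs, s', hs', hfst, hfst', heq, hle⟩ := ht
    obtain ⟨v, hv, v', hv', hvfst, hvfst', hveq, hvle⟩ := hu
    refine ⟨s + v, add_mem hs hv, s' + v', add_mem hs' hv', ?_, ?_, ?_, ?_⟩
    · simp only [Prod.fst_add, hfst, hvfst, Pi.add_def, add_mul, Finset.sum_add_distrib]
    · simp only [Prod.fst_add, hfst', hvfst', Pi.add_def, mul_add, Finset.sum_add_distrib]
    · simp only [Prod.snd_add, Prod.fst_add]
      linarith
    · simp only [Prod.snd_add]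
      linarith

lemma mem_auxRegion_prodLaw_of_mem_iidLaw_succ {n : ℕ} {t : ((Fin (n + 1) → 𝒳) → ℝ) × ℝ × ℝ}
    (ht : t ∈ auxRegion (iidLaw p (n + 1)) (X ∘ ·) (A ∘ ·) (C ∘ ·)) :
    (fun x => t.1 (Fin.cons x.1 x.2), t.2) ∈ auxRegion (prodLaw p (iidLaw p n))
      (fun ω => (X ω.1, X ∘ ω.2)) (fun ω => (A ω.1, A ∘ ω.2)) fun ω => (C ω.1, C ∘ ω.2) := by
  obtain ⟨k, f, hf, rfl⟩ := mem_auxRegion_iff.1 ht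
  refine mem_auxRegion_iff.2 ⟨k, fun u x => f u (Fin.cons x.1 x.2), fun u x => hf u _, ?_⟩
  ext <;> simp [Prod.fst_sum, Prod.snd_sum, entropyPoint, condEntropy_iidLaw_succ]

lemma exists_mem_auxRegion_of_mem_iidLaw (hp : IsPMF p) (n : ℕ) {t : ((Fin n → 𝒳) → ℝ) × ℝ × ℝ}
    (ht : t ∈ auxRegion (iidLaw p n) (X ∘ ·) (A ∘ ·) (C ∘ ·)) (ht₁ : t.1 = 1) :
    ∃ s ∈ auxRegion p X A C, s.1 = n ∧ s.2.1 = t.2.1 ∧ s.2.2 ≤ t.2.2 := by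
  induction n with
  | zero => exact ⟨0, zero_mem _, by simp [snd_eq_zero_of_mem_auxRegion ht]⟩
  | succ n ih =>
    obtain ⟨s, hs, s', hs', hfst, hfst', heq, hle⟩ := exists_mem_auxRegion_of_mem_prodLaw hp.1
      (iidLaw_nonneg hp.1 n) (mem_auxRegion_prodLaw_of_mem_iidLaw_succ ht)
    obtain ⟨v, hv, hvfst, hveq, hvle⟩ := ih hs' <| by
      simp [hfst', ht₁, hp.2, Pi.one_def]
    refine ⟨s + v, add_mem hs hv, ?_, ?_, ?_⟩
    · funext x
      simp [hfst, hvfst, ht₁, sum_iidLaw hp.2, add_comm]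
    · rw [Prod.snd_add, Prod.fst_add, hveq, heq]
    · rw [Prod.snd_add, Prod.snd_add]
      linarith

end Region

section SingleLetter

variable {Ω 𝒳 𝒥 𝒵 𝒴 : Type*} [Fintype Ω] [Fintype 𝒳] [Fintype 𝒥] [Fintype 𝒵] [Fintype 𝒴]

lemma withAux_mem_auxRegion {α γ : Type*} [Fintype α] [Fintype γ] {k : ℕ} {ch : 𝒳 → Fin k → ℝ}
    (hch : ∀ x, IsPMF (ch x)) (p : Ω → ℝ) (X : Ω → 𝒳) (A : Ω → α) (C : Ω → γ) :
    (1, ∑ u, condEntropy (fun ω => ch (X ω) u * p ω) X C,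
      ∑ u, condEntropy (fun ω => ch (X ω) u * p ω) A C) ∈ auxRegion p X A C := by
  refine mem_auxRegion_iff.2 ⟨k, fun u x => ch x u, fun u x => (hch x).1 u, ?_⟩
  ext <;> simp [Prod.fst_sum, Prod.snd_sum, entropyPoint, (hch _).2]

lemma exists_channel_of_mem_auxRegion {α γ : Type*} [Fintype α] [Fintype γ] {p : Ω → ℝ} {X : Ω → 𝒳}
    {A : Ω → α} {C : Ω → γ} {n : ℕ} (hn : 0 < n) {s : (𝒳 → ℝ) × ℝ × ℝ}
    (hs : s ∈ auxRegion p X A C) (hs₁ : s.1 = n) :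
    ∃ (k : ℕ) (ch : 𝒳 → Fin k → ℝ), (∀ x, IsPMF (ch x)) ∧
      n * ∑ u, condEntropy (fun ω => ch (X ω) u * p ω) X C = s.2.1 ∧
      n * ∑ u, condEntropy (fun ω => ch (X ω) u * p ω) A C = s.2.2 := by
  obtain ⟨k, f, hf, rfl⟩ := mem_auxRegion_iff.1 hs
  have hn' : (n : ℝ) ≠ 0 := Nat.cast_ne_zero.2 hn.ne'
  have hsum (x : 𝒳) : ∑ u, f u x = n := by
    simpa [entropyPoint, Prod.fst_sum] using congrFun hs₁ x
  refine ⟨k, fun x u => (n : ℝ)⁻¹ * f u x, fun x => ⟨fun u => ?_, ?_⟩, ?_⟩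
  · exact mul_nonneg (by positivity) (hf u x)
  · rw [← Finset.mul_sum, hsum, inv_mul_cancel₀ hn']
  · simp only [mul_assoc, condEntropy_const_mul, ← Finset.mul_sum, mul_inv_cancel_left₀ hn',
      Prod.snd_sum, Prod.fst_sum, entropyPoint, and_self]

theorem exists_channel_single_letter {p : Ω → ℝ} (hp : IsPMF p) (X : Ω → 𝒳) (J : Ω → 𝒥) (Z : Ω → 𝒵)
    (Y : Ω → 𝒴) {n : ℕ} (hn : 0 < n) {k : ℕ} {κ : (Fin n → 𝒳) → Fin k → ℝ}
    (hκ : ∀ x, IsPMF (κ x)) :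
    ∃ (l : ℕ) (ch : 𝒳 → Fin l → ℝ), (∀ x, IsPMF (ch x)) ∧
      n * condMI (withAux ch X p) Prod.fst (fun w => X w.2) (fun w => (Z w.2, J w.2)) =
        condMI (withAux κ (X ∘ ·) (iidLaw p n)) Prod.fst (fun w => X ∘ w.2)
          (fun w => (fun ω => (Z ω, J ω)) ∘ w.2) ∧
      condMI (withAux κ (X ∘ ·) (iidLaw p n)) (fun w => Y ∘ w.2) (fun w => (w.1, J ∘ w.2))
          (fun w => Z ∘ w.2) ≤
        n * condMI (withAux ch X p) (fun w => Y w.2) (fun w => (w.1, J w.2)) fun w => Z w.2 := by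
  have hκ₁ := fun x => (hκ x).2
  obtain ⟨s, hs, hs₁, hsX, hsY⟩ := exists_mem_auxRegion_of_mem_iidLaw hp n
    (withAux_mem_auxRegion hκ (iidLaw p n) (X ∘ ·) (Y ∘ ·) ((fun ω => (Z ω, J ω)) ∘ ·)) rfl
  obtain ⟨l, ch, hch, hchX, hchY⟩ := exists_channel_of_mem_auxRegion hn hs hs₁
  have hch₁ := fun x => (hch x).2
  refine ⟨l, ch, hch, ?_, ?_⟩
  · rw [condMI_withAux_left hch₁ X p X fun ω => (Z ω, J ω),
      condMI_withAux_left hκ₁ (X ∘ ·) _ (X ∘ ·) ((fun ω => (Z ω, J ω)) ∘ ·),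
      condEntropy_iidLaw hp.2, mul_sub, hchX, hsX]
  · have hZJ (f : (Fin n → Ω) → ℝ) : condEntropy f (Y ∘ ·) (fun ω => (Z ∘ ω, J ∘ ω)) =
        condEntropy f (Y ∘ ·) ((fun ω => (Z ω, J ω)) ∘ ·) :=
      condEntropy_congr f (fun ω ω' => by
        simp only [Prod.mk.injEq, funext_iff, Function.comp_apply, forall_and]) fun _ _ _ => Iff.rfl
    rw [condMI_withAux_right hch₁ X p Y J Z,
      condMI_withAux_right hκ₁ (X ∘ ·) _ (Y ∘ ·) (J ∘ ·) (Z ∘ ·), condEntropy_iidLaw hp.2, mul_sub,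
      hchY]
    simp only [hZJ]
    gcongr

end SingleLetter

section HypothesisTesting

lemma condMI_withAux_le_rate {Ω 𝒳 α γ : Type*} [Fintype Ω] [Fintype α] [Fintype γ] {p : Ω → ℝ}
    (hp : IsPMF p) {r : ℝ} (hr : 0 ≤ r) {κ : 𝒳 → Fin (2 ^ ⌊r⌋₊) → ℝ} (hκ : ∀ x, IsPMF (κ x))
    (X : Ω → 𝒳) (A : Fin (2 ^ ⌊r⌋₊) × Ω → α)
    (C : Fin (2 ^ ⌊r⌋₊) × Ω → γ) :
    condMI (withAux κ X p) Prod.fst A C ≤ r := by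
  calc condMI (withAux κ X p) Prod.fst A C
      ≤ (∑ w, withAux κ X p w) * Real.log (Fintype.card (Fin (2 ^ ⌊r⌋₊))) :=
        condMI_le_log_card (withAux_nonneg (fun x => (hκ x).1) X hp.1) _ _ _
    _ = ⌊r⌋₊ * Real.log 2 := by
        rw [sum_withAux fun x => (hκ x).2, hp.2, one_mul, Fintype.card_fin, Nat.cast_pow,
          Real.log_pow, Nat.cast_ofNat]
    -- Information is measured in nats, and a bit is less than a nat.
    _ ≤ ⌊r⌋₊ * 1 := by gcongr; exact Real.log_two_lt_d9.le.trans (by norm_num)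
    _ ≤ r := by simpa only [mul_one] using Nat.floor_le hr

variable {𝒳 𝒲 𝒥 𝒵 𝒴 ι : Type*} [Fintype 𝒳] [Fintype 𝒲] [Fintype 𝒥] [Fintype 𝒵] [Fintype 𝒴]
  [Fintype ι]

lemma pushf_withAux_iidLaw (P : 𝒳 × 𝒲 → ℝ) {n : ℕ} (κ : (Fin n → 𝒳) → ι → ℝ) :
    pushf (withAux κ (Prod.fst ∘ ·) (iidLaw P n)) (fun t => (t.1, Prod.snd ∘ t.2)) =
      fun mw => ∑ x, (∏ i, P (x i, mw.2 i)) * κ x mw.1 := by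
  funext ⟨m, w⟩
  rw [pushf_withAux_fst _ _ _ (Prod.snd ∘ ·)]
  simp only [pushf_iidLaw_prod P n Prod.fst Prod.snd, Prod.mk.eta, ← Function.id_def, pushf_id]

lemma klDiv_block_markovLaw {P : 𝒳 × 𝒲 → ℝ} (hP : 0 ≤ P) {A : 𝒲 → 𝒴} {B : 𝒲 → 𝒥} {C : 𝒲 → 𝒵}
    (hABC : (fun w => (A w, B w, C w)).Injective) {n : ℕ} {κ : (Fin n → 𝒳) → ι → ℝ}
    (hκ : ∀ x, IsPMF (κ x)) :
    klDiv (fun mw : ι × (Fin n → 𝒲) => ∑ x, (∏ i, P (x i, mw.2 i)) * κ x mw.1)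
        (fun mw => ∑ x, (∏ i, markovLaw P (fun ω => A ω.2) (fun ω => (ω.1, B ω.2))
          (fun ω => C ω.2) (x i, mw.2 i)) * κ x mw.1) =
      condMI (withAux κ (Prod.fst ∘ ·) (iidLaw P n)) (fun t => (fun ω => A ω.2) ∘ t.2)
        (fun t => (t.1, (fun ω => B ω.2) ∘ t.2)) (fun t => (fun ω => C ω.2) ∘ t.2) := by
  have hXW : (fun ω : Fin n → 𝒳 × 𝒲 => (Prod.fst ∘ ω, Prod.snd ∘ ω)).Bijective :=
    (Equiv.arrowProdEquivProdArrow (Fin n) (fun _ => 𝒳) fun _ => 𝒲).bijective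
  have hABCn : (fun w : Fin n → 𝒲 => (A ∘ w, B ∘ w, C ∘ w)).Injective := fun w w' h => by
    simp only [Prod.mk.injEq, funext_iff, Function.comp_apply] at h
    exact funext fun i => hABC (Prod.ext (h.1 i) (Prod.ext (h.2.1 i) (h.2.2 i)))
  rw [← pushf_withAux_iidLaw, ← pushf_withAux_iidLaw, iidLaw_markovLaw,
    markovLaw_congr (β' := (Fin n → 𝒳) × (Fin n → 𝒥))
      (B' := fun ω => (Prod.fst ∘ ω, B ∘ Prod.snd ∘ ω)) fun ω ω' => by
        simp only [Prod.mk.injEq, funext_iff, Function.comp_apply, forall_and]]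
  exact klDiv_pushf_withAux_markovLaw (X := (Prod.fst ∘ ·)) (W := (Prod.snd ∘ ·)) (A := (A ∘ ·))
    (B := (B ∘ ·)) (C := (C ∘ ·)) hκ (iidLaw_nonneg hP n) hXW hABCn

end HypothesisTesting

/-- Testing against conditional independence: with `Y = (J, Z, Ŷ)`,
if `I_Q(Ŷ;(X,J)|Z) = 0`, `P_XJZ = Q_XJZ` and `P_ŶZ = Q_ŶZ`, then
`E_{P_XY,Q_XY}(R) ≤ sup I_P(Ŷ;(U,J)|Z)` over channels with `I_P(U;X|(Z,J)) ≤ R`. -/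
theorem errExp_test_against_cond_independence {X J Z Yh : Type*}
    [Fintype X] [Fintype J] [Fintype Z] [Fintype Yh]
    (P Q : X × J × Z × Yh → ℝ) (hP : IsPMF P) (hQ : IsPMF Q)
    (hCI : condMI Q (fun w => w.2.2.2) (fun w => (w.1, w.2.1)) (fun w => w.2.2.1) = 0)
    (hXJZ : pushf P (fun w => (w.1, w.2.1, w.2.2.1)) = pushf Q (fun w => (w.1, w.2.1, w.2.2.1)))
    (hYhZ : pushf P (fun w => (w.2.2.2, w.2.2.1)) = pushf Q (fun w => (w.2.2.2, w.2.2.1)))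
    (hfin : klDiv P Q < ⊤) :
    ∀ R : ℝ, 0 < R →
      errExp P Q R
        ≤ sSup {v : EReal | ∃ (m : ℕ) (ch : X → Fin m → ℝ),
            (∀ x, IsPMF (ch x)) ∧
            condMI (fun w : Fin m × X × J × Z × Yh => ch w.2.1 w.1 * P w.2)
              (fun w => w.1) (fun w => w.2.1) (fun w => (w.2.2.2.1, w.2.2.1)) ≤ R ∧
            v = ((condMI (fun w : Fin m × X × J × Z × Yh => ch w.2.1 w.1 * P w.2)
              (fun w => w.2.2.2.2) (fun w => (w.1, w.2.2.1))
              (fun w => w.2.2.2.1) : ℝ) : EReal)} := by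
  intro R hR
  refine sSup_le ?_
  rintro _ ⟨n, hn, κ, hκ, rfl⟩
  have hn' : (0 : ℝ) < n := Nat.cast_pos.2 hn
  have hbij : (fun w : X × J × Z × Yh => (w.2.2.2, (w.1, w.2.1), w.2.2.1)).Bijective :=
    Function.bijective_iff_has_inverse.2
      ⟨fun t => (t.2.1.1, t.2.1.2, t.2.2, t.1), fun _ => rfl, fun _ => rfl⟩
  have hXJZ' := congrArg (pushf · fun t => ((t.1, t.2.1), t.2.2)) hXJZ
  simp only [pushf_pushf] at hXJZ'
  obtain ⟨m, ch, hch, hX, hY⟩ := exists_channel_single_letter hP Prod.fst (fun w => w.2.1)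
    (fun w => w.2.2.1) (fun w => w.2.2.2) hn hκ
  rw [eq_markovLaw_of_pushf_eq hQ.1 hbij hCI hYhZ hXJZ',
    klDiv_block_markovLaw (A := fun y => y.2.2) (B := Prod.fst) (C := fun y => y.2.1) hP.1
      (Function.LeftInverse.injective (g := fun t => (t.2.1, t.2.2, t.1)) fun _ => rfl) hκ]
  refine le_sSup_of_le ⟨m, ch, hch, ?_, rfl⟩ ?_
  · refine le_of_mul_le_mul_left ?_ hn'
    exact hX.trans_le (condMI_withAux_le_rate ⟨iidLaw_nonneg hP.1 n, sum_iidLaw hP.2 n⟩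
      (by positivity) hκ _ _ _)
  · rw [← EReal.coe_mul, EReal.coe_le_coe_iff, inv_mul_le_iff₀ hn']
    exact hY

end
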